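/- Let D be the dihedral group of order 2q with q odd, with cyclic subgroup G of order q and order-2 subgroups Σ, Σ'. Let B be a D-module that is finitely generated as a Z-module. Then the index (B : B^Σ + B^Σ' + B^G) is finite and |Ĥ⁰(D, B⊗Z[1/2])| / |Ĥ^{-1}(D, B⊗Z[1/2])| = (B : B^Σ + B^Σ' + B^G) · Q(G, B) · |I_G B ∩ B^D| / |I_G B ∩ B^G| · q^{rank_Z(B^D) − rank_Z(B^G)}, where Q(G, B) = |Ĥ⁰(G,B)|/|H¹(G,B)| is the Herbrand quotient. -/

import Mathlib

open DihedralGroup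

section Prelude

variable (q : ℕ) [NeZero q] (B : Type*) [AddCommGroup B]
  [DistribMulAction (DihedralGroup q) B]

/-- The subgroup of points fixed by a subgroup `H` of the dihedral group. -/
def fixedBy (H : Subgroup (DihedralGroup q)) : AddSubgroup B where
  carrier := {b | ∀ h ∈ H, h • b = b}
  zero_mem' := fun h _ => smul_zero h
  add_mem' := by intro a b ha hb h hh; rw [smul_add, ha h hh, hb h hh]
  neg_mem' := by intro a ha h hh; rw [smul_neg, ha h hh]

/-- The norm map of the rotation subgroup `G = ⟨ρ⟩`. -/
def normG : B →+ B where
  toFun b := ∑ i : ZMod q, (r i : DihedralGroup q) • b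
  map_zero' := by simp
  map_add' x y := by simp [smul_add, Finset.sum_add_distrib]

/-- `I_G·B = (1-ρ)B`. -/
def augG : AddSubgroup B :=
  AddMonoidHom.range
    { toFun := fun b => b - (r 1 : DihedralGroup q) • b
      map_zero' := by simp
      map_add' := by intro x y; simp only [smul_add]; abel }

/-- Tate cohomology `Ĥ⁰(G, B)`. -/
abbrev H0G : Type _ :=
  fixedBy q B (Subgroup.closure {(r 1 : DihedralGroup q)}) ⧸
    ((normG q B).range.addSubgroupOf (fixedBy q B (Subgroup.closure {r 1})))

/-- Inhomogeneous 1-cocycles of `G = ⟨ρ⟩ ≅ ℤ/q` with values in `B`. -/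
def Z1G : AddSubgroup (ZMod q → B) where
  carrier := {f | ∀ i j : ZMod q, f (i + j) = f i + (r i : DihedralGroup q) • f j}
  zero_mem' := by intro i j; simp
  add_mem' := by
    intro a b ha hb i j
    simp only [Pi.add_apply, ha i j, hb i j, smul_add]; abel
  neg_mem' := by
    intro a ha i j
    simp only [Pi.neg_apply, ha i j, smul_neg]; abel

/-- 1-coboundaries of `G` with values in `B`. -/
def B1G : AddSubgroup (ZMod q → B) :=
  AddMonoidHom.range
    { toFun := fun b => fun i : ZMod q => (r i : DihedralGroup q) • b - b
      map_zero' := by funext i; simp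
      map_add' := by intro x y; funext i; simp only [smul_add, Pi.add_apply]; abel }

/-- Group cohomology `H¹(G, B)` via inhomogeneous cocycles. -/
abbrev H1G : Type _ := Z1G q B ⧸ ((B1G q B).addSubgroupOf (Z1G q B))

/-- `B ⊗ ℤ[1/2]`, i.e. the localization of `B` away from 2. -/
abbrev Bhalf : Type _ := LocalizedModule (Submonoid.powers (2 : ℤ)) B

/-- The action of `g ∈ D` on `B ⊗ ℤ[1/2]`. -/
noncomputable def lact (g : DihedralGroup q) : Bhalf B →ₗ[ℤ] Bhalf B :=
  LocalizedModule.map (Submonoid.powers (2 : ℤ))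
    (DistribMulAction.toAddMonoidHom B g).toIntLinearMap

/-- The fixed points of `D` on `B ⊗ ℤ[1/2]`. -/
noncomputable def fixedD2 : AddSubgroup (Bhalf B) where
  carrier := {x | ∀ g : DihedralGroup q, lact q B g x = x}
  zero_mem' := fun g => map_zero _
  add_mem' := by intro a b ha hb g; rw [map_add, ha g, hb g]
  neg_mem' := by intro a ha g; rw [map_neg, ha g]

/-- The norm map of `D` on `B ⊗ ℤ[1/2]`. -/
noncomputable def normD2 : Bhalf B →+ Bhalf B where
  toFun x := ∑ g : DihedralGroup q, lact q B g x
  map_zero' := by simp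
  map_add' x y := by simp [map_add, Finset.sum_add_distrib]

/-- The augmentation submodule `I_D·(B ⊗ ℤ[1/2])`. -/
noncomputable def augD2 : AddSubgroup (Bhalf B) :=
  AddSubgroup.closure {x | ∃ (g : DihedralGroup q) (y : Bhalf B), x = y - lact q B g y}

/-- Tate cohomology `Ĥ⁰(D, B ⊗ ℤ[1/2])`. -/
abbrev H0Dhalf : Type _ :=
  fixedD2 q B ⧸ ((normD2 q B).range.addSubgroupOf (fixedD2 q B))

/-- Tate cohomology `Ĥ⁻¹(D, B ⊗ ℤ[1/2])`. -/
abbrev Hneg1Dhalf : Type _ :=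
  (normD2 q B).ker ⧸ ((augD2 q B).addSubgroupOf (normD2 q B).ker)

end Prelude

/-!
Let `I = I_G B`, `F = B^G`, `N` the norm of `G`, and let `V` be `B` or `B^Σ`. The inclusion
`F ∩ V → V / (I ∩ V)` followed by the map induced by `N` is multiplication by `q` on `F ∩ V`.
Comparing kernels and cokernels along this composite, where multiplication by `q` on a finitely
generated group of rank `k` has cokernel larger than its kernel by the factor `q ^ k`, gives

`(V : (I + F ∩ V) ∩ V) · (F ∩ V : N V) = q ^ rank (F ∩ V) · |I ∩ F ∩ V| · (ker N ∩ V : I ∩ V)`.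

For `V = B` the two indices of `N` and `I` are the orders of `Ĥ⁰(G, B)` and `H¹(G, B)`. For
`V = B^Σ` they are the orders of the Tate groups of `D` on `B ⊗ ℤ[1/2]`: these are `q`-torsion, so
inverting `2` costs nothing, and averaging over `Σ` reduces `D` to `G` acting on `Σ`-fixed points.
The formula is the quotient of the two identities, because `B^Σ + B^Σ' = I + B^Σ`.
-/

section AbelianGroups

variable {A B C : Type*} [AddCommGroup A] [AddCommGroup B] [AddCommGroup C]

theorem card_eq_card_mul_relIndex {H K : AddSubgroup A} (h : H ≤ K) :
    Nat.card K = Nat.card H * H.relIndex K := by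
  rw [← AddSubgroup.relIndex_bot_left, ← AddSubgroup.relIndex_bot_left,
    AddSubgroup.relIndex_mul_relIndex _ _ _ bot_le h]

theorem card_ker_comp (f : A →+ B) (g : B →+ C) :
    Nat.card (g.comp f).ker = Nat.card f.ker * Nat.card ↥(f.range ⊓ g.ker) := by
  have hle : f.ker ≤ (g.comp f).ker := fun x hx => by simp [AddMonoidHom.mem_ker.1 hx]
  rw [card_eq_card_mul_relIndex hle, AddSubgroup.relIndex_ker,
    ← AddMonoidHom.comap_ker, AddSubgroup.map_comap_eq]

theorem index_range_mul_index_range_mul_card_ker_comp (f : A →+ B) (g : B →+ C) :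
    f.range.index * g.range.index * Nat.card (g.comp f).ker =
      (g.comp f).range.index * Nat.card f.ker * Nat.card g.ker := by
  have hf : f.range.relIndex g.ker * (f.range ⊔ g.ker).index = f.range.index := by
    rw [← AddSubgroup.relIndex_sup_right, sup_comm,
      AddSubgroup.relIndex_mul_index le_sup_left]
  have hg : Nat.card g.ker = Nat.card ↥(f.range ⊓ g.ker) * f.range.relIndex g.ker := by
    rw [card_eq_card_mul_relIndex inf_le_right, AddSubgroup.inf_relIndex_right]
  rw [card_ker_comp, AddMonoidHom.range_comp, AddSubgroup.index_map, ← hf, hg]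
  ring

theorem index_range_nsmul_eq_card_ker_mul_pow [Module.Finite ℤ A] {q : ℕ} (hq : q ≠ 0) :
    (nsmulAddMonoidHom (α := A) q).range.index =
      Nat.card (nsmulAddMonoidHom (α := A) q).ker * q ^ Module.finrank ℤ A := by
  let T := Submodule.torsion ℤ A
  let π : A →+ A ⧸ T := T.mkQ.toAddMonoidHom
  have hπ : π.range = ⊤ := AddMonoidHom.range_eq_top.2 T.mkQ_surjective
  have hπker : π.ker = T.toAddSubgroup := by
    ext x
    exact Submodule.Quotient.mk_eq_zero T
  have hcomp : π.comp (nsmulAddMonoidHom q) = (nsmulAddMonoidHom q).comp π := by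
    ext x
    exact map_nsmul π q x
  have hrange : (π.comp (nsmulAddMonoidHom q)).range.index = q ^ Module.finrank ℤ A := by
    rw [hcomp, AddMonoidHom.range_comp, hπ, ← AddMonoidHom.range_eq_map,
      AddSubgroup.index_range_nsmul, finrank_quotient_eq_of_le_torsion le_rfl]
  have hker : (π.comp (nsmulAddMonoidHom q)).ker = π.ker := by
    rw [hcomp, ← AddMonoidHom.comap_ker,
      (AddMonoidHom.ker_eq_bot_iff _).2
        (AddSubgroup.nsmulAddMonoidHom_injective_of_isTorsionFree hq)]
    rfl
  have hT : 0 < Nat.card π.ker := by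
    rw [hπker]
    have : Finite T.toAddSubgroup := Module.finite_of_fg_torsion T Submodule.torsion_isTorsion
    exact Nat.card_pos
  have h := index_range_mul_index_range_mul_card_ker_comp (nsmulAddMonoidHom (α := A) q) π
  rw [hπ, AddSubgroup.index_top, mul_one, hrange, hker] at h
  rw [Nat.eq_of_mul_eq_mul_right hT h, mul_comm]

theorem relIndex_ne_zero_of_nsmul_mem [Module.Finite ℤ A] {L H : AddSubgroup A} {q : ℕ}
    (hq : q ≠ 0) (h : ∀ x ∈ H, q • x ∈ L) : L.relIndex H ≠ 0 := by
  have : Module.Finite ℤ (H ⧸ L.addSubgroupOf H) := by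
    have : Module.Finite ℤ H := inferInstanceAs (Module.Finite ℤ (AddSubgroup.toIntSubmodule H))
    exact Module.Finite.of_surjective (QuotientAddGroup.mk' (L.addSubgroupOf H)).toIntLinearMap
      (QuotientAddGroup.mk'_surjective _)
  have : Finite (H ⧸ L.addSubgroupOf H) := by
    refine Module.finite_of_fg_torsion _ fun x => ?_
    obtain ⟨x, rfl⟩ := QuotientAddGroup.mk_surjective x
    refine ⟨⟨(q : ℤ), mem_nonZeroDivisors_of_ne_zero (by exact_mod_cast hq)⟩, ?_⟩
    change (q : ℤ) • (x : H ⧸ L.addSubgroupOf H) = 0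
    rw [natCast_zsmul, ← QuotientAddGroup.mk_nsmul, QuotientAddGroup.eq_zero_iff]
    exact h x x.2
  exact AddSubgroup.index_ne_zero_of_finite

theorem index_range_mul_index_range_of_comp_eq_nsmul [Module.Finite ℤ A] {q : ℕ} (hq : q ≠ 0)
    {f : A →+ B} {g : B →+ A} (h : g.comp f = nsmulAddMonoidHom q) :
    f.range.index * g.range.index = q ^ Module.finrank ℤ A * Nat.card f.ker * Nat.card g.ker := by
  have hpos : 0 < Nat.card (g.comp f).ker := by
    rw [← AddSubgroup.relIndex_bot_left]
    refine Nat.pos_of_ne_zero (relIndex_ne_zero_of_nsmul_mem hq fun x hx => ?_)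
    rwa [h] at hx
  have hfg := index_range_mul_index_range_mul_card_ker_comp f g
  have hq := index_range_nsmul_eq_card_ker_mul_pow (A := A) hq
  rw [← h] at hq
  rw [hq] at hfg
  refine Nat.eq_of_mul_eq_mul_right hpos ?_
  linarith

theorem index_map_mk'_addSubgroupOf {I F V : AddSubgroup A} (hF : F ≤ V) :
    ((F.addSubgroupOf V).map (QuotientAddGroup.mk' (I.addSubgroupOf V))).index =
      (I ⊔ F).relIndex V := by
  rw [AddSubgroup.index_map, QuotientAddGroup.ker_mk', QuotientAddGroup.range_mk',
    AddSubgroup.index_top, mul_one, ← AddSubgroup.inf_addSubgroupOf_right I,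
    ← AddSubgroup.addSubgroupOf_sup hF inf_le_right, inf_comm, sup_comm F,
    inf_sup_assoc_of_le _ hF, AddSubgroup.inf_addSubgroupOf_left, AddSubgroup.relIndex]

theorem relIndex_sup_mul_relIndex_map [Module.Finite ℤ B] {n : B →+ B} {V I F : AddSubgroup B}
    {q : ℕ} (hq : q ≠ 0) (hI : I ≤ n.ker) (hF : F ≤ V) (hn : ∀ x ∈ V, n x ∈ F)
    (hnF : ∀ x ∈ F, n x = q • x) :
    (I ⊔ F).relIndex V * (V.map n).relIndex F =
      q ^ Module.finrank ℤ F * Nat.card ↥(I ⊓ F) * I.relIndex (n.ker ⊓ V) := by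
  have : Module.Finite ℤ F := inferInstanceAs (Module.Finite ℤ (AddSubgroup.toIntSubmodule F))
  let f : F →+ V ⧸ I.addSubgroupOf V :=
    (QuotientAddGroup.mk' (I.addSubgroupOf V)).comp (AddSubgroup.inclusion hF)
  let nV : V →+ F := (n.comp V.subtype).codRestrict F fun x => hn x x.2
  have hnV : nV.ker = n.ker.addSubgroupOf V := AddMonoidHom.ker_codRestrict _ _ _
  have hnVrange : nV.range = (V.map n).addSubgroupOf F := by
    ext x
    exact ⟨fun ⟨y, hy⟩ => ⟨y, y.2, congrArg Subtype.val hy⟩,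
      fun ⟨y, hy, h⟩ => ⟨⟨y, hy⟩, Subtype.ext h⟩⟩
  have hInV : I.addSubgroupOf V ≤ nV.ker := hnV ▸ fun x hx => hI hx
  let g : V ⧸ I.addSubgroupOf V →+ F := QuotientAddGroup.lift _ nV hInV
  have hfker : f.ker = (I ⊓ F).addSubgroupOf F := by
    rw [AddSubgroup.inf_addSubgroupOf_right]
    ext x
    exact QuotientAddGroup.eq_zero_iff _
  have hf : f.range.index = (I ⊔ F).relIndex V := by
    rw [AddMonoidHom.range_comp, AddSubgroup.inclusion_range, index_map_mk'_addSubgroupOf hF]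
  have hg : g.range.index = (V.map n).relIndex F := by
    rw [AddMonoidHom.range_eq_map, ← QuotientAddGroup.range_mk' (I.addSubgroupOf V),
      ← AddMonoidHom.range_comp, QuotientAddGroup.lift_comp_mk', hnVrange, AddSubgroup.relIndex]
  have hgker : Nat.card g.ker = I.relIndex (n.ker ⊓ V) := by
    rw [QuotientAddGroup.ker_lift, hnV, ← AddSubgroup.relIndex_ker, QuotientAddGroup.ker_mk',
      ← AddSubgroup.inf_addSubgroupOf_right n.ker, AddSubgroup.relIndex_addSubgroupOf inf_le_right]
  have hgf : g.comp f = nsmulAddMonoidHom q := by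
    ext x
    exact hnF x x.2
  rw [← hf, ← hg, ← hgker, index_range_mul_index_range_of_comp_eq_nsmul hq hgf, hfker,
    Nat.card_congr (AddSubgroup.addSubgroupOfEquivOfLe inf_le_right).toEquiv]

theorem mem_of_coprime_nsmul_mem {m n : ℕ} (h : m.Coprime n) {L : AddSubgroup A} {x : A}
    (hm : m • x ∈ L) (hn : n • x ∈ L) : x ∈ L := by
  obtain ⟨a, b, hab⟩ := Nat.isCoprime_iff_coprime.mpr h
  have : x = a • (m • x) + b • (n • x) := by
    rw [← natCast_zsmul, ← natCast_zsmul, smul_smul, smul_smul, ← add_smul, hab, one_smul]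
  rw [this]
  exact L.add_mem (L.zsmul_mem hm a) (L.zsmul_mem hn b)

theorem relIndex_eq_of_map_sup_eq (f : A →+ B) {L H : AddSubgroup A} {L' H' : AddSubgroup B}
    (hsup : H.map f ⊔ L' = H') (hmem : ∀ x ∈ H, f x ∈ L' ↔ x ∈ L) :
    L'.relIndex H' = L.relIndex H := by
  have hcomap : L'.comap f ⊓ H = L ⊓ H := by
    ext x
    exact and_congr_left (hmem x)
  rw [← hsup, AddSubgroup.relIndex_sup_right, ← AddSubgroup.relIndex_comap,
    ← AddSubgroup.inf_relIndex_right, hcomap, AddSubgroup.inf_relIndex_right]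

theorem relIndex_eq_of_pow_nsmul_mem {p q : ℕ} (hpq : q.Coprime p) (f : A →+ B)
    {L H : AddSubgroup A} {L' H' : AddSubgroup B}
    (hq : ∀ x ∈ H, q • x ∈ L) (hq' : ∀ y ∈ H', q • y ∈ L') (hL' : L' ≤ H')
    (hHH' : ∀ x ∈ H, f x ∈ H') (hLL' : ∀ x ∈ L, f x ∈ L')
    (hsurj : ∀ y ∈ H', ∃ n, p ^ n • y ∈ H.map f ⊔ L')
    (hinj : ∀ x ∈ H, f x ∈ L' → ∃ n, p ^ n • x ∈ L) :
    L'.relIndex H' = L.relIndex H := by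
  refine relIndex_eq_of_map_sup_eq f (le_antisymm ?_ fun y hy => ?_)
    fun x hx => ⟨fun h => ?_, hLL' x⟩
  · exact sup_le (AddSubgroup.map_le_iff_le_comap.2 hHH') hL'
  · obtain ⟨n, hn⟩ := hsurj y hy
    exact mem_of_coprime_nsmul_mem (hpq.pow_right n) (AddSubgroup.mem_sup_right (hq' y hy)) hn
  · obtain ⟨n, hn⟩ := hinj x hx h
    exact mem_of_coprime_nsmul_mem (hpq.pow_right n) (hq x hx) hn

end AbelianGroups

section Dihedral

theorem sum_range_natCast_zmod {M : Type*} [AddCommMonoid M] {q : ℕ} [NeZero q] (f : ZMod q → M) :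
    ∑ j ∈ Finset.range q, f j = ∑ i, f i := by
  refine Finset.sum_bij' (fun j _ => (j : ZMod q)) (fun i _ => i.val) ?_ ?_ ?_ ?_ ?_
  · simp
  · simp [ZMod.val_lt]
  · exact fun j hj => ZMod.val_cast_of_lt (Finset.mem_range.1 hj)
  · simp
  · simp

variable {q : ℕ} {B : Type*} [AddCommGroup B] [DistribMulAction (DihedralGroup q) B]

theorem mem_fixedBy_closure_singleton {g : DihedralGroup q} {x : B} :
    x ∈ fixedBy q B (Subgroup.closure {g}) ↔ g • x = x := by
  refine ⟨fun h => h g (Subgroup.subset_closure rfl), fun h => ?_⟩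
  have : Subgroup.closure {g} ≤ MulAction.stabilizer (DihedralGroup q) x := by
    rw [Subgroup.closure_le]
    rintro _ rfl
    exact h
  exact fun g hg => this hg

variable (q B) in
/-- The subgroup `B^G` of points fixed by the rotations. -/
abbrev fixedG : AddSubgroup B := fixedBy q B (Subgroup.closure {(r 1 : DihedralGroup q)})

variable (q B) in
/-- The subgroup `B^Σ` of points fixed by the reflection `sr 0`, which generates `Σ`. -/
abbrev fixedS : AddSubgroup B := fixedBy q B (Subgroup.closure {(sr 0 : DihedralGroup q)})

theorem mem_fixedG {x : B} : x ∈ fixedG q B ↔ (r 1 : DihedralGroup q) • x = x :=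
  mem_fixedBy_closure_singleton

theorem mem_fixedS {x : B} : x ∈ fixedS q B ↔ (sr 0 : DihedralGroup q) • x = x :=
  mem_fixedBy_closure_singleton

theorem mem_augG {x : B} : x ∈ augG q B ↔ ∃ y : B, y - (r 1 : DihedralGroup q) • y = x := Iff.rfl

theorem sr_zero_smul_sr_zero_smul (x : B) :
    (sr 0 : DihedralGroup q) • (sr 0 : DihedralGroup q) • x = x := by
  rw [smul_smul, sr_mul_self, one_smul]

theorem sr_zero_smul_r_smul (i : ZMod q) (x : B) :
    (sr 0 : DihedralGroup q) • (r i : DihedralGroup q) • x =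
      (r (-i) : DihedralGroup q) • (sr 0 : DihedralGroup q) • x := by
  rw [smul_smul, smul_smul, sr_mul_r, r_mul_sr, sub_neg_eq_add]

theorem sr_smul (i : ZMod q) (x : B) :
    (sr i : DihedralGroup q) • x = (sr 0 : DihedralGroup q) • (r i : DihedralGroup q) • x := by
  rw [smul_smul, sr_mul_r, zero_add]

theorem add_sr_zero_smul_mem_fixedS (x : B) : x + (sr 0 : DihedralGroup q) • x ∈ fixedS q B := by
  rw [mem_fixedS, smul_add, sr_zero_smul_sr_zero_smul, add_comm]

variable [NeZero q]

theorem r_smul_of_mem_fixedG {x : B} (hx : x ∈ fixedG q B) (i : ZMod q) :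
    (r i : DihedralGroup q) • x = x := by
  refine hx (r i) ?_
  rw [← ZMod.natCast_zmod_val i, ← r_one_pow]
  exact Subgroup.pow_mem _ (Subgroup.mem_closure_singleton_self _) _

theorem sr_zero_smul_mem_fixedG {x : B} (hx : x ∈ fixedG q B) :
    (sr 0 : DihedralGroup q) • x ∈ fixedG q B := by
  have h := sr_zero_smul_r_smul (q := q) (-1) x
  rw [r_smul_of_mem_fixedG hx, neg_neg] at h
  exact mem_fixedG.2 h.symm

theorem fixedBy_top : fixedBy q B ⊤ = fixedG q B ⊓ fixedS q B := by
  ext x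
  refine ⟨fun h => ⟨fun g _ => h g trivial, fun g _ => h g trivial⟩, ?_⟩
  rintro ⟨hG, hS⟩ (i | i) -
  · exact r_smul_of_mem_fixedG hG i
  · rw [sr_smul, r_smul_of_mem_fixedG hG, mem_fixedS.1 hS]

theorem normG_apply (x : B) : normG q B x = ∑ i : ZMod q, (r i : DihedralGroup q) • x := rfl

theorem normG_r_smul (i : ZMod q) (x : B) :
    normG q B ((r i : DihedralGroup q) • x) = normG q B x := by
  simp only [normG_apply, smul_smul, r_mul_r]
  exact Equiv.sum_comp (Equiv.addRight i) fun j => (r j : DihedralGroup q) • x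

theorem normG_sr_zero_smul (x : B) :
    normG q B ((sr 0 : DihedralGroup q) • x) = (sr 0 : DihedralGroup q) • normG q B x := by
  simp only [normG_apply, Finset.smul_sum, sr_zero_smul_r_smul]
  exact (Equiv.sum_comp (Equiv.neg (ZMod q)) fun j =>
    (r j : DihedralGroup q) • (sr 0 : DihedralGroup q) • x).symm

theorem normG_mem_fixedG (x : B) : normG q B x ∈ fixedG q B := by
  rw [mem_fixedG, normG_apply, Finset.smul_sum]
  simp only [smul_smul, r_mul_r]
  exact Equiv.sum_comp (Equiv.addLeft (1 : ZMod q)) fun j => (r j : DihedralGroup q) • x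

theorem normG_mem_fixedS {x : B} (hx : x ∈ fixedS q B) : normG q B x ∈ fixedS q B := by
  rw [mem_fixedS, ← normG_sr_zero_smul, mem_fixedS.1 hx]

theorem normG_of_mem_fixedG {x : B} (hx : x ∈ fixedG q B) : normG q B x = q • x := by
  simp [normG_apply, r_smul_of_mem_fixedG hx]

theorem sub_r_smul_mem_augG (i : ZMod q) (x : B) : x - (r i : DihedralGroup q) • x ∈ augG q B := by
  rw [← ZMod.natCast_zmod_val i]
  induction i.val with
  | zero => simp [r_zero]
  | succ n ih =>
    have h : (r ((n + 1 : ℕ) : ZMod q) : DihedralGroup q) • x =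
        (r 1 : DihedralGroup q) • (r (n : ZMod q) : DihedralGroup q) • x := by
      rw [smul_smul, r_mul_r, Nat.cast_succ, add_comm]
    rw [h, ← sub_add_sub_cancel x ((r (n : ZMod q) : DihedralGroup q) • x)]
    exact add_mem ih (mem_augG.2 ⟨_, rfl⟩)

theorem nsmul_sub_normG_mem_augG (x : B) : q • x - normG q B x ∈ augG q B := by
  have : q • x - normG q B x = ∑ i : ZMod q, (x - (r i : DihedralGroup q) • x) := by
    simp [normG_apply, Finset.sum_sub_distrib]
  rw [this]
  exact sum_mem fun i _ => sub_r_smul_mem_augG i x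

theorem nsmul_mem_augG_sup {x : B} {H : AddSubgroup B} (hx : normG q B x ∈ H) :
    q • x ∈ augG q B ⊔ H := by
  rw [← sub_add_cancel (q • x) (normG q B x)]
  exact AddSubgroup.add_mem_sup (nsmul_sub_normG_mem_augG x) hx

theorem nsmul_mem_augG {x : B} (hx : x ∈ (normG q B).ker) : q • x ∈ augG q B := by
  simpa [AddMonoidHom.mem_ker.1 hx] using nsmul_sub_normG_mem_augG (q := q) x

theorem augG_le_ker_normG : augG q B ≤ (normG q B).ker := by
  intro x hx
  obtain ⟨y, rfl⟩ := mem_augG.1 hx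
  rw [AddMonoidHom.mem_ker, map_sub, normG_r_smul, sub_self]

theorem sr_zero_smul_mem_augG {x : B} (hx : x ∈ augG q B) :
    (sr 0 : DihedralGroup q) • x ∈ augG q B := by
  obtain ⟨y, rfl⟩ := mem_augG.1 hx
  rw [smul_sub, sr_zero_smul_r_smul]
  exact sub_r_smul_mem_augG _ _

theorem fixedS_sup_fixedBy (hq : Odd q) :
    fixedS q B ⊔ fixedBy q B (Subgroup.closure {(sr 0 * r 1 : DihedralGroup q)}) =
      augG q B ⊔ fixedS q B := by
  have hmem {x : B} : x ∈ fixedBy q B (Subgroup.closure {(sr 0 * r 1 : DihedralGroup q)}) ↔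
      (sr 0 : DihedralGroup q) • (r 1 : DihedralGroup q) • x = x := by
    rw [mem_fixedBy_closure_singleton, mul_smul]
  refine le_antisymm (sup_le le_sup_right fun x hx => ?_) (sup_le (fun x hx => ?_) le_sup_left)
  · obtain ⟨m, hm⟩ := hq
    -- `m + 1` is the inverse of `2` modulo `q`, so `r (m + 1)` conjugates `Σ'` to `Σ`.
    have hk : (m + 1 : ZMod q) + m = 0 := by
      rw [← ZMod.natCast_self q, hm]
      push_cast
      ring
    have hS : (r (m + 1) : DihedralGroup q) • x ∈ fixedS q B := by
      rw [mem_fixedS, ← r_mul_r, mul_smul, sr_zero_smul_r_smul, hmem.1 hx,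
        neg_eq_of_add_eq_zero_left hk, smul_smul, r_mul_r]
    rw [← sub_add_cancel x ((r (m + 1) : DihedralGroup q) • x)]
    exact AddSubgroup.add_mem_sup (sub_r_smul_mem_augG _ _) hS
  · obtain ⟨y, rfl⟩ := mem_augG.1 hx
    let t := (sr 0 : DihedralGroup q) • (r 1 : DihedralGroup q) • y
    have ht : (sr 0 : DihedralGroup q) • (r 1 : DihedralGroup q) • t = y := by
      simp only [t, smul_smul, ← mul_assoc, sr_mul_r, sr_mul_sr]
      simp
    have hsub : y - (r 1 : DihedralGroup q) • y = -((r 1 : DihedralGroup q) • y + t) + (y + t) := by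
      abel
    rw [hsub]
    refine AddSubgroup.add_mem_sup (neg_mem (add_sr_zero_smul_mem_fixedS _)) (hmem.2 ?_)
    rw [smul_add, smul_add, ht, add_comm]

theorem relIndex_augG_sup_fixedG_fixedS (hq : Odd q) :
    (augG q B ⊔ fixedG q B).relIndex (fixedS q B) =
      (augG q B ⊔ fixedG q B ⊓ fixedS q B).relIndex (fixedS q B) := by
  have h : (augG q B ⊔ fixedG q B) ⊓ fixedS q B ≤ augG q B ⊔ fixedG q B ⊓ fixedS q B := by
    rintro x ⟨hx, hS⟩
    refine mem_of_coprime_nsmul_mem hq.coprime_two_right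
      (nsmul_mem_augG_sup ⟨normG_mem_fixedG x, normG_mem_fixedS hS⟩) ?_
    obtain ⟨i, hi, f, hf, rfl⟩ := AddSubgroup.mem_sup.1 hx
    have htwo : 2 • (i + f) = (i + (sr 0 : DihedralGroup q) • i) +
        (f + (sr 0 : DihedralGroup q) • f) := by
      rw [add_add_add_comm, ← smul_add, mem_fixedS.1 hS, two_nsmul]
    rw [htwo]
    exact AddSubgroup.add_mem_sup (add_mem hi (sr_zero_smul_mem_augG hi))
      ⟨add_mem hf (sr_zero_smul_mem_fixedG hf), add_sr_zero_smul_mem_fixedS f⟩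
  rw [← AddSubgroup.inf_relIndex_right,
    le_antisymm (le_inf h inf_le_right) (inf_le_inf_right _ (sup_le_sup_left inf_le_left _)),
    AddSubgroup.inf_relIndex_right]

theorem index_fixedS_sup_fixedBy_sup_fixedG_mul_relIndex (hq : Odd q) :
    (fixedS q B ⊔ fixedBy q B (Subgroup.closure {(sr 0 * r 1 : DihedralGroup q)}) ⊔
        fixedG q B).index * (augG q B ⊔ fixedG q B ⊓ fixedS q B).relIndex (fixedS q B) =
      (augG q B ⊔ fixedG q B).index := by
  rw [fixedS_sup_fixedBy hq, sup_right_comm, ← relIndex_augG_sup_fixedG_fixedS hq, mul_comm,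
    ← AddSubgroup.relIndex_sup_right, sup_comm (fixedS q B),
    AddSubgroup.relIndex_mul_index le_sup_left]

theorem card_H0G : Nat.card (H0G q B) = (normG q B).range.relIndex (fixedG q B) := rfl

theorem apply_one_mem_ker_normG {f : ZMod q → B} (hf : f ∈ Z1G q B) : f 1 ∈ (normG q B).ker := by
  have h := Finset.sum_congr (s₁ := Finset.univ) rfl fun (i : ZMod q) _ => hf i 1
  have hshift : ∑ i, f (i + 1) = ∑ i, f i := Equiv.sum_comp (Equiv.addRight (1 : ZMod q)) f
  rwa [Finset.sum_add_distrib, hshift, left_eq_add] at h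

theorem exists_mem_Z1G_apply_one_eq {b : B} (hb : b ∈ (normG q B).ker) :
    ∃ f ∈ Z1G q B, f 1 = b := by
  let F : ℕ → B := fun n => ∑ j ∈ Finset.range n, (r (j : ZMod q) : DihedralGroup q) • b
  have hadd (m n : ℕ) : F (m + n) = F m + (r (m : ZMod q) : DihedralGroup q) • F n := by
    simp only [F, Finset.sum_range_add, Finset.smul_sum, smul_smul, r_mul_r, Nat.cast_add]
  have hper : Function.Periodic F q := fun n => by
    have hq : F q = 0 :=
      (sum_range_natCast_zmod fun i => (r i : DihedralGroup q) • b).trans hb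
    rw [hadd, hq, smul_zero, add_zero]
  refine ⟨fun i => F i.val, fun i j => ?_, ?_⟩
  · change F (i + j).val = F i.val + (r i : DihedralGroup q) • F j.val
    rw [ZMod.val_add, hper.map_mod_nat, hadd, ZMod.natCast_zmod_val]
  · change F (1 : ZMod q).val = b
    rw [ZMod.val_one_eq_one_mod, hper.map_mod_nat]
    simp [F, r_zero]

theorem mem_B1G_iff {f : ZMod q → B} (hf : f ∈ Z1G q B) : f ∈ B1G q B ↔ f 1 ∈ augG q B := by
  constructor
  · rintro ⟨y, rfl⟩
    refine mem_augG.2 ⟨-y, ?_⟩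
    rw [smul_neg, sub_neg_eq_add, neg_add_eq_sub]
    rfl
  · intro h
    obtain ⟨y, hy⟩ := mem_augG.1 h
    have hf0 : f 0 = 0 := by simpa [r_zero] using hf 0 0
    have hfn (n : ℕ) : f n = y - (r (n : ZMod q) : DihedralGroup q) • y := by
      induction n with
      | zero => simp [hf0, r_zero]
      | succ n ih =>
        rw [Nat.cast_succ, hf, ih, ← hy, smul_sub, smul_smul, r_mul_r, sub_add_sub_cancel]
    refine ⟨-y, funext fun i => ?_⟩
    rw [← ZMod.natCast_zmod_val i, hfn]
    change (r _ : DihedralGroup q) • -y - -y = _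
    rw [smul_neg, sub_neg_eq_add, neg_add_eq_sub]

theorem card_H1G : Nat.card (H1G q B) = (augG q B).relIndex (normG q B).ker := by
  refine (relIndex_eq_of_map_sup_eq (Pi.evalAddMonoidHom (fun _ => B) 1) ?_
    fun f hf => (mem_B1G_iff hf).symm).symm
  refine le_antisymm (sup_le ?_ augG_le_ker_normG) fun b hb => AddSubgroup.mem_sup_left ?_
  · rintro _ ⟨f, hf, rfl⟩
    exact apply_one_mem_ker_normG hf
  · exact exists_mem_Z1G_apply_one_eq hb

end Dihedral

section LocalizationAtTwo

variable {M M' : Type*} [AddCommGroup M] [AddCommGroup M'] {_ : Module ℤ M} {_ : Module ℤ M'}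
  (f : M →ₗ[ℤ] M') [IsLocalizedModule (Submonoid.powers (2 : ℤ)) f]

include f in
theorem two_nsmul_bijective_of_isLocalizedModule : Function.Bijective fun y : M' => 2 • y := by
  have h := IsLocalizedModule.map_units f (⟨2, 1, pow_one 2⟩ : Submonoid.powers (2 : ℤ))
  convert (Module.End.isUnit_iff _).1 h using 2 with y
  rw [Module.algebraMap_end_apply, ← Nat.cast_smul_eq_nsmul ℤ, Nat.cast_ofNat]

theorem exists_two_pow_nsmul_eq_apply (y : M') : ∃ (n : ℕ) (b : M), 2 ^ n • y = f b := by
  obtain ⟨⟨b, ⟨_, n, rfl⟩⟩, h⟩ := IsLocalizedModule.surj (Submonoid.powers (2 : ℤ)) f y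
  refine ⟨n, b, ?_⟩
  rw [← Nat.cast_smul_eq_nsmul ℤ, Nat.cast_pow, Nat.cast_ofNat]
  exact h

theorem exists_two_pow_nsmul_eq_of_apply_eq {a b : M} (h : f a = f b) :
    ∃ n : ℕ, 2 ^ n • a = 2 ^ n • b := by
  obtain ⟨⟨_, n, rfl⟩, h⟩ := IsLocalizedModule.exists_of_eq (S := Submonoid.powers (2 : ℤ)) h
  refine ⟨n, ?_⟩
  rw [← Nat.cast_smul_eq_nsmul ℤ, ← Nat.cast_smul_eq_nsmul ℤ, Nat.cast_pow, Nat.cast_ofNat]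
  exact h

end LocalizationAtTwo

section DihedralLocalization

variable {B : Type*} [AddCommGroup B]

variable (B) in
/-- The localization map `B → B ⊗ ℤ[1/2]`, as a map of additive groups. -/
noncomputable abbrev toHalf : B →+ Bhalf B :=
  (LocalizedModule.mkLinearMap (Submonoid.powers (2 : ℤ)) B).toAddMonoidHom

theorem two_nsmul_bijective : Function.Bijective fun y : Bhalf B => 2 • y :=
  two_nsmul_bijective_of_isLocalizedModule (LocalizedModule.mkLinearMap _ B)

theorem exists_two_pow_nsmul_eq_toHalf (y : Bhalf B) :
    ∃ (n : ℕ) (b : B), 2 ^ n • y = toHalf B b :=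
  exists_two_pow_nsmul_eq_apply (LocalizedModule.mkLinearMap _ B) y

theorem exists_two_pow_nsmul_eq {a b : B} (h : toHalf B a = toHalf B b) :
    ∃ n : ℕ, 2 ^ n • a = 2 ^ n • b :=
  exists_two_pow_nsmul_eq_of_apply_eq (LocalizedModule.mkLinearMap _ B) h

variable {q : ℕ} [DistribMulAction (DihedralGroup q) B]

theorem lact_mk (g : DihedralGroup q) (b : B) (s : Submonoid.powers (2 : ℤ)) :
    lact q B g (LocalizedModule.mk b s) = LocalizedModule.mk (g • b) s :=
  IsLocalizedModule.map_LocalizedModules (Submonoid.powers (2 : ℤ))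
    (DistribSMul.toAddMonoidHom B g).toIntLinearMap b s

theorem lact_toHalf (g : DihedralGroup q) (b : B) : lact q B g (toHalf B b) = toHalf B (g • b) :=
  lact_mk g b 1

theorem lact_lact (g h : DihedralGroup q) (y : Bhalf B) :
    lact q B g (lact q B h y) = lact q B (g * h) y := by
  induction y using LocalizedModule.induction_on with
  | h b s => rw [lact_mk, lact_mk, lact_mk, mul_smul]

theorem sub_lact_mem_augD2 (g : DihedralGroup q) (y : Bhalf B) : y - lact q B g y ∈ augD2 q B :=
  AddSubgroup.subset_closure ⟨g, y, rfl⟩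

theorem toHalf_mem_augD2 {b : B} (hb : b ∈ augG q B) : toHalf B b ∈ augD2 q B := by
  obtain ⟨y, rfl⟩ := mem_augG.1 hb
  rw [map_sub, ← lact_toHalf]
  exact sub_lact_mem_augD2 _ _

theorem exists_two_pow_nsmul_mem_fixedBy_closure {g : DihedralGroup q} {b : B}
    (h : lact q B g (toHalf B b) = toHalf B b) :
    ∃ n : ℕ, 2 ^ n • b ∈ fixedBy q B (Subgroup.closure {g}) := by
  rw [lact_toHalf] at h
  obtain ⟨n, hn⟩ := exists_two_pow_nsmul_eq h
  exact ⟨n, mem_fixedBy_closure_singleton.2 ((smul_comm _ _ _).trans hn)⟩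

theorem exists_two_pow_nsmul_mem_map_toHalf {y : Bhalf B} (hy : y ∈ fixedD2 q B) :
    ∃ n : ℕ, 2 ^ n • y ∈ (fixedG q B ⊓ fixedS q B).map (toHalf B) := by
  obtain ⟨n, b, hb⟩ := exists_two_pow_nsmul_eq_toHalf y
  have hfix (g : DihedralGroup q) : lact q B g (toHalf B b) = toHalf B b := by
    rw [← hb, map_nsmul, hy g]
  obtain ⟨k, hk⟩ := exists_two_pow_nsmul_mem_fixedBy_closure (hfix (r 1))
  obtain ⟨l, hl⟩ := exists_two_pow_nsmul_mem_fixedBy_closure (hfix (sr 0))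
  refine ⟨l + k + n, 2 ^ (l + k) • b, ⟨?_, ?_⟩, ?_⟩
  · rw [pow_add, mul_smul]
    exact nsmul_mem hk _
  · rw [add_comm, pow_add, mul_smul]
    exact nsmul_mem hl _
  · rw [map_nsmul, ← hb, smul_smul, ← pow_add]

variable [NeZero q]

theorem toHalf_mem_fixedD2 {b : B} (hb : b ∈ fixedG q B ⊓ fixedS q B) :
    toHalf B b ∈ fixedD2 q B := by
  rw [← fixedBy_top] at hb
  exact fun g => (lact_toHalf g b).trans (congrArg _ (hb g trivial))

theorem normD2_apply (y : Bhalf B) : normD2 q B y = ∑ g : DihedralGroup q, lact q B g y := rfl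

theorem normD2_toHalf (b : B) :
    normD2 q B (toHalf B b) = toHalf B (normG q B (b + (sr 0 : DihedralGroup q) • b)) := by
  rw [map_add, normG_sr_zero_smul, normG_apply, Finset.smul_sum, map_add, map_sum, map_sum,
    normD2_apply, ← Equiv.sum_comp equivSum.symm, Fintype.sum_sum_type]
  simp only [← sr_smul, ← lact_toHalf]
  rfl

theorem normD2_lact (g : DihedralGroup q) (y : Bhalf B) :
    normD2 q B (lact q B g y) = normD2 q B y := by
  simp only [normD2_apply, lact_lact]
  exact Equiv.sum_comp (Equiv.mulRight g) fun h => lact q B h y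

theorem normD2_mem_fixedD2 (y : Bhalf B) : normD2 q B y ∈ fixedD2 q B := fun g => by
  simp only [normD2_apply, map_sum, lact_lact]
  exact Equiv.sum_comp (Equiv.mulLeft g) fun h => lact q B h y

theorem normD2_of_mem_fixedD2 {y : Bhalf B} (hy : y ∈ fixedD2 q B) :
    normD2 q B y = (2 * q) • y := by
  rw [normD2_apply, Finset.sum_congr rfl fun g _ => hy g, Finset.sum_const, Finset.card_univ,
    DihedralGroup.card]

theorem augD2_le_ker_normD2 : augD2 q B ≤ (normD2 q B).ker := by
  rw [augD2, AddSubgroup.closure_le]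
  rintro _ ⟨g, y, rfl⟩
  exact (map_sub _ _ _).trans (sub_eq_zero.2 (normD2_lact g y).symm)

theorem nsmul_sub_normD2_mem_augD2 (y : Bhalf B) : (2 * q) • y - normD2 q B y ∈ augD2 q B := by
  have h : (2 * q) • y - normD2 q B y = ∑ g : DihedralGroup q, (y - lact q B g y) := by
    rw [Finset.sum_sub_distrib, normD2_apply, Finset.sum_const, Finset.card_univ,
      DihedralGroup.card]
  rw [h]
  exact sum_mem fun g _ => sub_lact_mem_augD2 g y

theorem mem_range_normD2_of_two_nsmul_mem {y : Bhalf B} (h : 2 • y ∈ (normD2 q B).range) :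
    y ∈ (normD2 q B).range := by
  obtain ⟨z, hz⟩ := h
  obtain ⟨z, rfl⟩ := two_nsmul_bijective.2 z
  exact ⟨z, two_nsmul_bijective.1 ((map_nsmul _ _ _).symm.trans hz)⟩

theorem nsmul_mem_augD2 {y : Bhalf B} (hy : y ∈ (normD2 q B).ker) : q • y ∈ augD2 q B := by
  obtain ⟨z, rfl⟩ := two_nsmul_bijective.2 y
  have hz : normD2 q B z = 0 :=
    two_nsmul_bijective.1 ((map_nsmul _ _ _).symm.trans (hy.trans (nsmul_zero 2).symm))
  simpa only [hz, sub_zero, mul_comm 2 q, mul_smul] using nsmul_sub_normD2_mem_augD2 (q := q) z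

theorem exists_two_pow_nsmul_mem_map_normG {b : B} (hb : toHalf B b ∈ (normD2 q B).range) :
    ∃ n : ℕ, 2 ^ n • b ∈ (fixedS q B).map (normG q B) := by
  obtain ⟨y, hy⟩ := hb
  obtain ⟨n, c, hc⟩ := exists_two_pow_nsmul_eq_toHalf y
  have h : toHalf B (2 ^ n • b) = toHalf B (normG q B (c + (sr 0 : DihedralGroup q) • c)) := by
    rw [map_nsmul, ← hy, ← map_nsmul, hc, normD2_toHalf]
  obtain ⟨m, hm⟩ := exists_two_pow_nsmul_eq h
  refine ⟨m + n, ?_⟩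
  rw [pow_add, mul_smul, hm]
  exact nsmul_mem (AddSubgroup.mem_map_of_mem _ (add_sr_zero_smul_mem_fixedS c)) _

theorem card_H0Dhalf (hq : Odd q) : Nat.card (H0Dhalf q B) =
    ((fixedS q B).map (normG q B)).relIndex (fixedG q B ⊓ fixedS q B) := by
  refine relIndex_eq_of_pow_nsmul_mem hq.coprime_two_right (toHalf B) (fun b hb => ?_)
    (fun y hy => mem_range_normD2_of_two_nsmul_mem ⟨y, ?_⟩) ?_ (fun _ => toHalf_mem_fixedD2) ?_
    (fun y hy => ?_) (fun b _ => exists_two_pow_nsmul_mem_map_normG)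
  · exact ⟨b, hb.2, normG_of_mem_fixedG hb.1⟩
  · rw [normD2_of_mem_fixedD2 hy, mul_smul]
  · rintro _ ⟨y, rfl⟩
    exact normD2_mem_fixedD2 y
  · rintro _ ⟨c, hc, rfl⟩
    refine mem_range_normD2_of_two_nsmul_mem ⟨toHalf B c, ?_⟩
    rw [normD2_toHalf, mem_fixedS.1 hc, ← two_nsmul, map_nsmul, map_nsmul]
  · obtain ⟨n, hn⟩ := exists_two_pow_nsmul_mem_map_toHalf hy
    exact ⟨n, AddSubgroup.mem_sup_left hn⟩

theorem sub_smul_add_sr_zero_smul_mem_augG (g : DihedralGroup q) (b : B) :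
    b - g • b + (sr 0 : DihedralGroup q) • (b - g • b) ∈ augG q B := by
  have hr (i : ZMod q) : b - (r i : DihedralGroup q) • b +
      (sr 0 : DihedralGroup q) • (b - (r i : DihedralGroup q) • b) ∈ augG q B :=
    add_mem (sub_r_smul_mem_augG i b) (sr_zero_smul_mem_augG (sub_r_smul_mem_augG i b))
  rcases g with i | i
  · exact hr i
  · convert hr i using 1
    rw [sr_smul, smul_sub, smul_sub, sr_zero_smul_sr_zero_smul]
    abel

theorem exists_two_pow_nsmul_add_lact_eq_toHalf {y : Bhalf B} (hy : y ∈ augD2 q B) :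
    ∃ n : ℕ, ∃ i ∈ augG q B, 2 ^ n • (y + lact q B (sr 0) y) = toHalf B i := by
  induction hy using AddSubgroup.closure_induction with
  | mem y hy =>
    obtain ⟨g, z, rfl⟩ := hy
    obtain ⟨n, b, hb⟩ := exists_two_pow_nsmul_eq_toHalf z
    refine ⟨n, _, sub_smul_add_sr_zero_smul_mem_augG g b, ?_⟩
    simp only [nsmul_add, nsmul_sub, ← map_nsmul, hb, map_add, map_sub, ← lact_toHalf]
  | zero => exact ⟨0, 0, zero_mem _, by simp⟩
  | add x y _ _ hx hy =>
    obtain ⟨n, i, hi, hx⟩ := hx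
    obtain ⟨m, j, hj, hy⟩ := hy
    refine ⟨n + m, 2 ^ m • i + 2 ^ n • j, add_mem (nsmul_mem hi _) (nsmul_mem hj _), ?_⟩
    rw [map_add, map_add, map_nsmul, map_nsmul, ← hx, ← hy, smul_smul, smul_smul, ← pow_add,
      ← pow_add, add_comm m n, ← nsmul_add, add_add_add_comm]
  | neg x _ hx =>
    obtain ⟨n, i, hi, hx⟩ := hx
    exact ⟨n, -i, neg_mem hi, by rw [map_neg, map_neg, ← hx, ← neg_add, neg_nsmul]⟩

theorem exists_two_pow_nsmul_mem_augG {b : B} (hS : b ∈ fixedS q B)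
    (hb : toHalf B b ∈ augD2 q B) : ∃ n : ℕ, 2 ^ n • b ∈ augG q B := by
  obtain ⟨n, i, hi, h⟩ := exists_two_pow_nsmul_add_lact_eq_toHalf hb
  rw [lact_toHalf, mem_fixedS.1 hS, ← two_nsmul, smul_smul, ← pow_succ, ← map_nsmul] at h
  obtain ⟨m, hm⟩ := exists_two_pow_nsmul_eq h
  refine ⟨m + (n + 1), ?_⟩
  rw [pow_add, mul_smul, hm]
  exact nsmul_mem hi _

theorem exists_two_pow_nsmul_mem_map_toHalf_sup_augD2 {y : Bhalf B} (hy : y ∈ (normD2 q B).ker) :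
    ∃ n : ℕ, 2 ^ n • y ∈ ((normG q B).ker ⊓ fixedS q B).map (toHalf B) ⊔ augD2 q B := by
  obtain ⟨n, b, hb⟩ := exists_two_pow_nsmul_eq_toHalf y
  have h : toHalf B (normG q B (b + (sr 0 : DihedralGroup q) • b)) = toHalf B 0 := by
    rw [← normD2_toHalf, ← hb, map_nsmul, AddMonoidHom.mem_ker.1 hy, nsmul_zero, map_zero]
  obtain ⟨m, hm⟩ := exists_two_pow_nsmul_eq h
  have hmem : 2 ^ m • (b + (sr 0 : DihedralGroup q) • b) ∈ (normG q B).ker ⊓ fixedS q B := by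
    refine ⟨?_, nsmul_mem (add_sr_zero_smul_mem_fixedS b) _⟩
    exact (map_nsmul _ _ _).trans (hm.trans (nsmul_zero _))
  have hsplit : 2 ^ (m + n + 1) • y = toHalf B (2 ^ m • (b + (sr 0 : DihedralGroup q) • b)) +
      2 ^ (m + n) • (y - lact q B (sr 0) y) := by
    rw [map_nsmul, map_add, ← lact_toHalf, ← hb, map_nsmul, ← nsmul_add, smul_smul, ← pow_add,
      ← nsmul_add, pow_succ, mul_smul, two_nsmul, add_add_sub_cancel]
  refine ⟨m + n + 1, ?_⟩
  rw [hsplit]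
  exact AddSubgroup.add_mem_sup ⟨_, hmem, rfl⟩ (nsmul_mem (sub_lact_mem_augD2 _ y) _)

theorem card_Hneg1Dhalf (hq : Odd q) :
    Nat.card (Hneg1Dhalf q B) = (augG q B).relIndex ((normG q B).ker ⊓ fixedS q B) := by
  refine relIndex_eq_of_pow_nsmul_mem hq.coprime_two_right (toHalf B)
    (fun b hb => nsmul_mem_augG hb.1) (fun y => nsmul_mem_augD2) augD2_le_ker_normD2
    (fun b hb => ?_) (fun b => toHalf_mem_augD2)
    (fun y => exists_two_pow_nsmul_mem_map_toHalf_sup_augD2)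
    (fun b hb => exists_two_pow_nsmul_mem_augG hb.2)
  rw [AddMonoidHom.mem_ker, normD2_toHalf, map_add, normG_sr_zero_smul,
    AddMonoidHom.mem_ker.1 hb.1, smul_zero, add_zero, map_zero]

end DihedralLocalization

section IndexFormula

variable {q : ℕ} [NeZero q] {B : Type*} [AddCommGroup B] [DistribMulAction (DihedralGroup q) B]
  [Module.Finite ℤ B]

theorem card_augG_inf_fixedG_ne_zero : Nat.card ↥(augG q B ⊓ fixedG q B) ≠ 0 := by
  rw [← AddSubgroup.relIndex_bot_left]
  refine relIndex_ne_zero_of_nsmul_mem (NeZero.ne q) fun x hx => ?_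
  rw [AddSubgroup.mem_bot, ← normG_of_mem_fixedG hx.2]
  exact augG_le_ker_normG hx.1

theorem index_augG_sup_fixedG_ne_zero : (augG q B ⊔ fixedG q B).index ≠ 0 := by
  rw [← AddSubgroup.relIndex_top_right]
  exact relIndex_ne_zero_of_nsmul_mem (NeZero.ne q) fun x _ =>
    nsmul_mem_augG_sup (normG_mem_fixedG x)

theorem card_H1G_ne_zero : Nat.card (H1G q B) ≠ 0 := by
  rw [card_H1G]
  exact relIndex_ne_zero_of_nsmul_mem (NeZero.ne q) fun x => nsmul_mem_augG

theorem card_Hneg1Dhalf_ne_zero (hq : Odd q) : Nat.card (Hneg1Dhalf q B) ≠ 0 := by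
  rw [card_Hneg1Dhalf hq]
  exact relIndex_ne_zero_of_nsmul_mem (NeZero.ne q) fun x hx => nsmul_mem_augG hx.1

theorem index_augG_sup_fixedG_mul_card_H0G :
    (augG q B ⊔ fixedG q B).index * Nat.card (H0G q B) =
      q ^ Module.finrank ℤ (fixedG q B) * Nat.card ↥(augG q B ⊓ fixedG q B) *
        Nat.card (H1G q B) := by
  have h := relIndex_sup_mul_relIndex_map (V := ⊤) (NeZero.ne q) augG_le_ker_normG
    (le_top (a := fixedG q B)) (fun x _ => normG_mem_fixedG x) fun x => normG_of_mem_fixedG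
  rwa [AddSubgroup.relIndex_top_right, ← AddMonoidHom.range_eq_map, inf_top_eq, ← card_H0G,
    ← card_H1G] at h

theorem relIndex_fixedS_mul_card_H0Dhalf (hq : Odd q) :
    (augG q B ⊔ fixedG q B ⊓ fixedS q B).relIndex (fixedS q B) * Nat.card (H0Dhalf q B) =
      q ^ Module.finrank ℤ ↥(fixedG q B ⊓ fixedS q B) *
        Nat.card ↥(augG q B ⊓ (fixedG q B ⊓ fixedS q B)) * Nat.card (Hneg1Dhalf q B) := by
  rw [card_H0Dhalf hq, card_Hneg1Dhalf hq]
  exact relIndex_sup_mul_relIndex_map (NeZero.ne q) augG_le_ker_normG inf_le_right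
    (fun x hx => ⟨normG_mem_fixedG x, normG_mem_fixedS hx⟩) fun x hx => normG_of_mem_fixedG hx.1

theorem finite_quotient_fixedS_sup_fixedBy_sup_fixedG (hq : Odd q) :
    Finite (B ⧸ (fixedS q B ⊔
      fixedBy q B (Subgroup.closure {(sr 0 * r 1 : DihedralGroup q)}) ⊔ fixedG q B)) := by
  have h := index_augG_sup_fixedG_ne_zero (q := q) (B := B)
  rw [← index_fixedS_sup_fixedBy_sup_fixedG_mul_relIndex hq] at h
  have : AddSubgroup.FiniteIndex _ := ⟨left_ne_zero_of_mul h⟩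
  exact AddSubgroup.finite_quotient_of_finiteIndex

theorem card_H0Dhalf_mul_eq_index_mul_card_Hneg1Dhalf (hq : Odd q) :
    Nat.card (H0Dhalf q B) * (q ^ Module.finrank ℤ (fixedG q B) *
        Nat.card ↥(augG q B ⊓ fixedG q B) * Nat.card (H1G q B)) =
      (fixedS q B ⊔ fixedBy q B (Subgroup.closure {(sr 0 * r 1 : DihedralGroup q)}) ⊔
        fixedG q B).index * Nat.card (H0G q B) *
      (q ^ Module.finrank ℤ ↥(fixedG q B ⊓ fixedS q B) *
        Nat.card ↥(augG q B ⊓ (fixedG q B ⊓ fixedS q B)) * Nat.card (Hneg1Dhalf q B)) := by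
  rw [← index_augG_sup_fixedG_mul_card_H0G, ← relIndex_fixedS_mul_card_H0Dhalf hq,
    ← index_fixedS_sup_fixedBy_sup_fixedG_mul_relIndex hq]
  ring

end IndexFormula

/-- Let `D` be dihedral of order `2q` (`q` odd), with subgroups `G`, `Σ`,
`Σ'`, and let `B` be a `D`-module finitely generated over `ℤ`.  Then the index
`(B : B^Σ + B^Σ' + B^G)` is finite and
`|Ĥ⁰(D, B⊗ℤ[1/2])| / |Ĥ⁻¹(D, B⊗ℤ[1/2])|
  = (B : B^Σ + B^Σ' + B^G) · Q(G,B) · |I_G B ∩ B^D| / |I_G B ∩ B^G| · q^(rk B^D − rk B^G)`,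
where `Q(G, B) = |Ĥ⁰(G, B)|/|H¹(G, B)|` is the Herbrand quotient. -/
theorem tate_ratio_eq_index_formula (q : ℕ) [NeZero q] (hq : Odd q)
    (B : Type*) [AddCommGroup B] [DistribMulAction (DihedralGroup q) B]
    (hfg : AddGroup.FG B) :
    Finite (B ⧸ (fixedBy q B (Subgroup.closure {(sr 0 : DihedralGroup q)}) ⊔
      fixedBy q B (Subgroup.closure {(sr 0 * r 1 : DihedralGroup q)}) ⊔
      fixedBy q B (Subgroup.closure {(r 1 : DihedralGroup q)}))) ∧
    (Nat.card (H0Dhalf q B) : ℚ) / (Nat.card (Hneg1Dhalf q B) : ℚ) =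
      (Nat.card (B ⧸ (fixedBy q B (Subgroup.closure {(sr 0 : DihedralGroup q)}) ⊔
          fixedBy q B (Subgroup.closure {(sr 0 * r 1 : DihedralGroup q)}) ⊔
          fixedBy q B (Subgroup.closure {(r 1 : DihedralGroup q)}))) : ℚ) *
        ((Nat.card (H0G q B) : ℚ) / (Nat.card (H1G q B) : ℚ)) *
        ((Nat.card ↥(augG q B ⊓ fixedBy q B (⊤ : Subgroup (DihedralGroup q))) : ℚ) /
          (Nat.card ↥(augG q B ⊓ fixedBy q B (Subgroup.closure {(r 1 : DihedralGroup q)})) : ℚ)) *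
        (q : ℚ) ^
          ((Module.finrank ℤ ↥(fixedBy q B (⊤ : Subgroup (DihedralGroup q))) : ℤ) -
            (Module.finrank ℤ ↥(fixedBy q B (Subgroup.closure {(r 1 : DihedralGroup q)})) : ℤ)) := by
  have : Module.Finite ℤ B := Module.Finite.iff_addGroup_fg.2 hfg
  refine ⟨finite_quotient_fixedS_sup_fixedBy_sup_fixedG hq, ?_⟩
  have hq0 : (q : ℚ) ≠ 0 := Nat.cast_ne_zero.2 (NeZero.ne q)
  have hH1 : (Nat.card (H1G q B) : ℚ) ≠ 0 := Nat.cast_ne_zero.2 card_H1G_ne_zero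
  have hHneg1 : (Nat.card (Hneg1Dhalf q B) : ℚ) ≠ 0 :=
    Nat.cast_ne_zero.2 (card_Hneg1Dhalf_ne_zero hq)
  have hcard : (Nat.card ↥(augG q B ⊓ fixedG q B) : ℚ) ≠ 0 :=
    Nat.cast_ne_zero.2 card_augG_inf_fixedG_ne_zero
  have key := congrArg (Nat.cast (R := ℚ))
    (card_H0Dhalf_mul_eq_index_mul_card_Hneg1Dhalf (q := q) (B := B) hq)
  rw [AddSubgroup.index_eq_card] at key
  push_cast at key
  rw [fixedBy_top, zpow_sub₀ hq0, zpow_natCast, zpow_natCast]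
  field_simp
  linear_combination key
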